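/- arXiv:cs/0207072 — 3 statements merged into one kernel-verified Lean document; each statement's English description precedes it below -/
import Mathlib

section
/- Let T = B1,…,Bn be any nested abnormality theory (NAT), and let T' be the single-block NAT {Z : B1,…,Bn}, where Z is any subset of the atoms At∖Ab. Then T and T' have exactly the same models. -/
/-!
STATEMENT 3: grouping the blocks of a NAT into a single block preserves the models.
-/

namespace NestedCirc

universe u
variable {α : Type u}

/-- Propositional formulas over atoms `α`. -/
inductive PForm (α : Type u) : Type u where
  | tru : PForm α
  | fls : PForm α
  | atom : α → PForm α
  | neg : PForm α → PForm α
  | conj : PForm α → PForm α → PForm α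
  | disj : PForm α → PForm α → PForm α

namespace PForm

/-- Satisfaction of a propositional formula in an interpretation (set of true atoms). -/
def sat : PForm α → Set α → Prop
  | tru, _ => True
  | fls, _ => False
  | atom a, M => a ∈ M
  | neg φ, M => ¬ φ.sat M
  | conj φ ψ, M => φ.sat M ∧ ψ.sat M
  | disj φ ψ, M => φ.sat M ∨ ψ.sat M

/-- Implication `φ → ψ`. -/
def imp (φ ψ : PForm α) : PForm α := disj (neg φ) ψ

/-- Equivalence `φ ↔ ψ`. -/
def iffF (φ ψ : PForm α) : PForm α := conj (imp φ ψ) (imp ψ φ)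

/-- The atoms occurring in a formula. -/
def atoms : PForm α → Set α
  | tru => ∅
  | fls => ∅
  | atom a => {a}
  | neg φ => φ.atoms
  | conj φ ψ => φ.atoms ∪ ψ.atoms
  | disj φ ψ => φ.atoms ∪ ψ.atoms

/-- Conjunction of a list of formulas. -/
def conjList (l : List (PForm α)) : PForm α := l.foldr conj tru

end PForm

/-- `M ≤_{P;Z} M'` : `M` agrees with `M'` on the fixed atoms `(P ∪ Z)ᶜ`
and is smaller or equal on the minimized atoms `P`. -/
def lePZ (P Z M M' : Set α) : Prop :=
  M ∩ P ⊆ M' ∩ P ∧ M ∩ (P ∪ Z)ᶜ = M' ∩ (P ∪ Z)ᶜ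

/-- `M <_{P;Z} M'` (strict preference). -/
def ltPZ (P Z M M' : Set α) : Prop := lePZ P Z M M' ∧ ¬ lePZ P Z M' M

/-- A block `{C : B₁,…,Bₘ}` of a nested abnormality theory: the described atoms `C`,
the members that are propositional formulas, and the members that are blocks. -/
inductive Block (α : Type u) : Type u where
  | mk : Set α → List (PForm α) → List (Block α) → Block α

/-- Satisfaction of a block: `M ⊨ {C : B₁,…,Bₘ}` iff some interpretation `M*` agreeing
with `M` outside `Ab` satisfies every member and is `(Ab;C)`-minimal doing so. -/
def Block.sat (Ab : Set α) : Block α → Set α → Prop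
  | .mk C fs bs, M =>
      ∃ Ms : Set α, Ms ∩ Abᶜ = M ∩ Abᶜ ∧
        ((∀ f ∈ fs, f.sat Ms) ∧ ∀ b ∈ bs, Block.sat Ab b Ms) ∧
        ∀ N : Set α, ((∀ f ∈ fs, f.sat N) ∧ ∀ b ∈ bs, Block.sat Ab b N) → ¬ ltPZ Ab C N Ms

/-- A nested abnormality theory (NAT): a finite collection of blocks. -/
abbrev NAT (α : Type u) := List (Block α)

/-- `M ⊨ T` iff `M` satisfies every block of `T`. -/
def NAT.sat (Ab : Set α) (T : NAT α) (M : Set α) : Prop := ∀ B ∈ T, Block.sat Ab B M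

theorem not_ltPZ_of_disjoint {P M : Set α} (hM : Disjoint M P) (Z N : Set α) :
    ¬ ltPZ P Z N M := by
  rintro ⟨⟨-, fixed_eq⟩, not_le⟩
  have subset_on_P : M ∩ P ⊆ N ∩ P := hM.inter_eq.trans_subset (Set.empty_subset _)
  exact not_le ⟨subset_on_P, fixed_eq.symm⟩

theorem Block.sat_congr {Ab M N : Set α} (h : M ∩ Abᶜ = N ∩ Abᶜ) (B : Block α) :
    B.sat Ab M ↔ B.sat Ab N := by
  cases B
  simp only [Block.sat, h]

theorem NAT.sat_congr {Ab M N : Set α} (h : M ∩ Abᶜ = N ∩ Abᶜ) (T : NAT α) :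
    NAT.sat Ab T M ↔ NAT.sat Ab T N :=
  forall₂_congr fun B _ => B.sat_congr h

/-- Let `T = B₁,…,Bₙ` be any NAT and let `T' = {Z : B₁,…,Bₙ}` be the
single-block NAT whose members are the blocks of `T`, where `Z` is any subset of the
atoms `At ∖ Ab`.  Then `T` and `T'` have exactly the same models. -/
theorem group_blocks (Ab : Set α) (T : NAT α) (Z : Set α) (hZ : Z ⊆ Abᶜ) :
    ∀ M : Set α, NAT.sat Ab T M ↔ Block.sat Ab (.mk Z [] T) M := by
  intro M
  rw [Block.sat]
  constructor
  · intro hM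
    -- No block of `T` sees the atoms of `Ab`, so all abnormalities may be made false.
    have agree : M ∩ Abᶜ ∩ Abᶜ = M ∩ Abᶜ := by rw [Set.inter_assoc, Set.inter_self]
    have models : NAT.sat Ab T (M ∩ Abᶜ) := (NAT.sat_congr agree T).mpr hM
    have no_abnormalities : Disjoint (M ∩ Abᶜ) Ab := disjoint_compl_left.inter_left' M
    exact ⟨M ∩ Abᶜ, agree, ⟨by simp, models⟩,
      fun N _ => not_ltPZ_of_disjoint no_abnormalities Z N⟩
  · rintro ⟨Ms, agree, ⟨-, models⟩, -⟩
    exact (NAT.sat_congr agree T).mp models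

end NestedCirc
end

section
/- Let Φ = ∀X ∃Y ψ be a quantified Boolean formula with ψ propositional over the disjoint atom sets X and Y, let u be a fresh atom, ab ∈ Ab an abnormality atom, φ = ψ ∨ u, and let T1 be the NAT consisting of the single block {Y, u : φ, u ↔ ab}. Then: (a) T1 ⊨ ¬u if and only if Φ is true; and (b) every model M of T1 satisfies: M ⊨ u if and only if ψ[M[X]] is unsatisfiable, i.e., no truth assignment to Y makes ψ true when X is fixed to its values in M. -/
/-!
STATEMENT 6: the NAT `T₁ = {Y, u : ψ ∨ u, u ↔ ab}` expresses the QBF `Φ = ∀X ∃Y ψ`: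
`T₁ ⊨ ¬u` iff `Φ` is true, and a model `M` of `T₁` satisfies `u` iff `ψ[M[X]]` is unsatisfiable.
-/

namespace NestedCirc

universe u
variable {α : Type u}

/-!
The block minimizes `Ab` while `Y` and `u` vary and `X` stays fixed. A model of its formulas with
`u` false satisfies `ψ`, and with all abnormality atoms made false it is minimal. A model with `u`
true is forced to have `ab` true; with no other abnormality atom true, it can be improved exactly
when the values of `Y` can be changed so as to satisfy `ψ` without `u`. Hence `M` is a model of
`T₁` iff either `u` is false and `ψ` true in `M`, or `u` is true in `M` and `ψ[M[X]]` is
unsatisfiable.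
-/

theorem inter_eq_inter_of_subset {A B M N : Set α} (hBA : B ⊆ A) (h : M ∩ A = N ∩ A) :
    M ∩ B = N ∩ B := by
  rw [← Set.inter_eq_right.mpr hBA, ← Set.inter_assoc, h, Set.inter_assoc]

section Formulas

variable {M N V X Y : Set α} {ψ : PForm α}

namespace PForm

theorem sat_congr (h : ∀ a ∈ ψ.atoms, (a ∈ M ↔ a ∈ N)) : ψ.sat M ↔ ψ.sat N := by
  induction ψ with
  | tru | fls => rfl
  | atom a => exact h a rfl
  | neg φ ih => exact not_congr (ih h)
  | conj φ χ ihφ ihχ | disj φ χ ihφ ihχ =>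
    simp only [sat, ihφ fun a ha => h a (.inl ha), ihχ fun a ha => h a (.inr ha)]

theorem sat_inter_iff (hψ : ψ.atoms ⊆ X) : ψ.sat (M ∩ X) ↔ ψ.sat M :=
  sat_congr fun _ ha => and_iff_left (hψ ha)

theorem sat_iffF {φ χ : PForm α} : (φ.iffF χ).sat M ↔ (φ.sat M ↔ χ.sat M) := by
  simp only [iffF, imp, sat, iff_iff_implies_and_implies, imp_iff_not_or]

/-- `ψ[M[X]]` is satisfiable: some assignment to `Y` makes `ψ` true when `X` is fixed to its values
in `M`. All atoms outside `X ∪ Y` are taken to be false. -/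
def SatisfiableGiven (X Y : Set α) (ψ : PForm α) (M : Set α) : Prop :=
  ∃ IY : Set α, ψ.sat ((M ∩ X) ∪ (IY ∩ Y))

theorem satisfiableGiven_congr (hMN : M ∩ X = N ∩ X) :
    ψ.SatisfiableGiven X Y M ↔ ψ.SatisfiableGiven X Y N := by
  simp only [SatisfiableGiven, hMN]

theorem sat.satisfiableGiven (hψ : ψ.atoms ⊆ X ∪ Y) (hM : ψ.sat M) :
    ψ.SatisfiableGiven X Y M :=
  ⟨M, by rwa [← Set.inter_union_distrib_left, sat_inter_iff hψ]⟩

theorem SatisfiableGiven.exists_sat (hψ : ψ.atoms ⊆ X ∪ Y) (hXV : Disjoint X V) (hYV : Y ⊆ V)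
    (h : ψ.SatisfiableGiven X Y M) :
    ∃ N : Set α, ψ.sat N ∧ N ∩ Vᶜ = M ∩ Vᶜ ∧ N ∩ V ⊆ Y := by
  obtain ⟨IY, hIY⟩ := h
  refine ⟨(M ∩ Vᶜ) ∪ (IY ∩ Y), (sat_congr fun a ha => ?_).mp hIY, ?_, ?_⟩
  · have hX : a ∈ X → a ∉ V := fun haX => Set.disjoint_left.mp hXV haX
    have hY : a ∈ Y → a ∈ V := fun haY => hYV haY
    have hXY : a ∈ X ∨ a ∈ Y := hψ ha
    simp only [Set.mem_union, Set.mem_inter_iff, Set.mem_compl_iff]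
    tauto
  · grind
  · grind

end PForm

end Formulas

section Minimality

variable {P Z M N : Set α} {F : Set α → Prop}

theorem ltPZ_iff_ssubset :
    ltPZ P Z M N ↔ M ∩ P ⊂ N ∩ P ∧ M ∩ (P ∪ Z)ᶜ = N ∩ (P ∪ Z)ᶜ := by
  simp only [ltPZ, lePZ, Set.ssubset_def]
  grind

/-- `M` is a model of the circumscription of `F` in which the atoms of `P` are minimized, those of
`Z` vary and all others are fixed. -/
def IsMinimalModel (P Z : Set α) (F : Set α → Prop) (M : Set α) : Prop :=
  F M ∧ ∀ N : Set α, F N → ¬ ltPZ P Z N M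

theorem isMinimalModel_of_inter_eq_empty (hM : F M) (hMP : M ∩ P = ∅) :
    IsMinimalModel P Z F M := by
  refine ⟨hM, fun N _ hNM => ?_⟩
  rw [ltPZ_iff_ssubset, hMP] at hNM
  exact not_lt_bot hNM.1

theorem isMinimalModel_of_inter_eq_singleton {a : α} (hM : F M) (hMP : M ∩ P = {a})
    (hmin : ∀ N, F N → N ∩ (P ∪ Z)ᶜ = M ∩ (P ∪ Z)ᶜ → (N ∩ P).Nonempty) :
    IsMinimalModel P Z F M := by
  refine ⟨hM, fun N hN hNM => ?_⟩
  rw [ltPZ_iff_ssubset, hMP, Set.ssubset_singleton_iff] at hNM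
  exact (hmin N hN hNM.2).ne_empty hNM.1

theorem IsMinimalModel.inter_nonempty (hM : IsMinimalModel P Z F M) (hMP : (M ∩ P).Nonempty)
    (hN : F N) (hNM : N ∩ (P ∪ Z)ᶜ = M ∩ (P ∪ Z)ᶜ) : (N ∩ P).Nonempty := by
  by_contra hNP
  rw [Set.not_nonempty_iff_eq_empty] at hNP
  refine hM.2 N hN (ltPZ_iff_ssubset.mpr ⟨?_, hNM⟩)
  rwa [hNP, Set.empty_ssubset]

theorem Block.sat_mk_nil_iff {Ab C : Set α} {fs : List (PForm α)} :
    Block.sat Ab (.mk C fs []) M ↔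
      ∃ Ms, Ms ∩ Abᶜ = M ∩ Abᶜ ∧ IsMinimalModel Ab C (fun N => ∀ f ∈ fs, f.sat N) Ms := by
  simp [Block.sat, IsMinimalModel]

end Minimality

section QBF

variable {Ab X Y M : Set α} {u ab : α} {ψ : PForm α}

/-- The theory `T₁`, whose only block is `{Y, u : ψ ∨ u, u ↔ ab}`. -/
def qbfTheory (Y : Set α) (u ab : α) (ψ : PForm α) : NAT α :=
  [Block.mk (Y ∪ {u}) [ψ.disj (.atom u), PForm.iffF (.atom u) (.atom ab)] []]

/-- `M` satisfies the formulas `ψ ∨ u` and `u ↔ ab` of the block of `T₁`, regardless of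
minimality. -/
def SatisfiesQBFMembers (u ab : α) (ψ : PForm α) (M : Set α) : Prop :=
  (ψ.sat M ∨ u ∈ M) ∧ (u ∈ M ↔ ab ∈ M)

theorem sat_qbfTheory_iff_exists_isMinimalModel :
    NAT.sat Ab (qbfTheory Y u ab ψ) M ↔
      ∃ Ms, Ms ∩ Abᶜ = M ∩ Abᶜ ∧
        IsMinimalModel Ab (Y ∪ {u}) (SatisfiesQBFMembers u ab ψ) Ms := by
  have members_eq : (fun N => ∀ f ∈ [ψ.disj (.atom u), PForm.iffF (.atom u) (.atom ab)], f.sat N) =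
      SatisfiesQBFMembers u ab ψ := by
    funext N
    simp [SatisfiesQBFMembers, PForm.sat_iffF, PForm.sat]
  rw [NAT.sat, qbfTheory, List.forall_mem_singleton, Block.sat_mk_nil_iff, members_eq]

theorem isMinimalModel_qbf_of_sat (hab : ab ∈ Ab) (hu : u ∉ M) (hMAb : M ∩ Ab = ∅)
    (hM : ψ.sat M) : IsMinimalModel Ab (Y ∪ {u}) (SatisfiesQBFMembers u ab ψ) M :=
  have habM : ab ∉ M := fun h => Set.eq_empty_iff_forall_notMem.mp hMAb ab ⟨h, hab⟩
  isMinimalModel_of_inter_eq_empty ⟨.inl hM, iff_of_false hu habM⟩ hMAb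

theorem isMinimalModel_qbf_of_not_satisfiableGiven (hab : ab ∈ Ab) (hψ : ψ.atoms ⊆ X ∪ Y)
    (hX : Disjoint X (Ab ∪ (Y ∪ {u}))) (hu : u ∈ M) (hMAb : M ∩ Ab = {ab})
    (hM : ¬ ψ.SatisfiableGiven X Y M) :
    IsMinimalModel Ab (Y ∪ {u}) (SatisfiesQBFMembers u ab ψ) M := by
  have habM : ab ∈ M := (hMAb.ge rfl).1
  refine isMinimalModel_of_inter_eq_singleton ⟨.inr hu, iff_of_true hu habM⟩ hMAb ?_
  rintro N ⟨hψu, huab⟩ hNM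
  have hNX : N ∩ X = M ∩ X := inter_eq_inter_of_subset hX.subset_compl_right hNM
  have hN : ¬ ψ.sat N := fun h =>
    hM ((PForm.satisfiableGiven_congr hNX).mp (h.satisfiableGiven hψ))
  exact ⟨ab, huab.mp (hψu.resolve_left hN), hab⟩

theorem not_satisfiableGiven_of_isMinimalModel_qbf (hab : ab ∈ Ab) (hψ : ψ.atoms ⊆ X ∪ Y)
    (hX : Disjoint X (Ab ∪ (Y ∪ {u}))) (hY : Disjoint Y (Ab ∪ {u}))
    (hM : IsMinimalModel Ab (Y ∪ {u}) (SatisfiesQBFMembers u ab ψ) M) (hu : u ∈ M) :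
    ¬ ψ.SatisfiableGiven X Y M := by
  intro hsat
  obtain ⟨N, hN, hNM, hNY⟩ :=
    hsat.exists_sat hψ hX (Set.subset_union_left.trans Set.subset_union_right)
  have hNfalse : ∀ a ∈ Ab ∪ {u}, a ∉ N := fun a ha haN =>
    Set.disjoint_right.mp hY ha (hNY ⟨haN, by grind⟩)
  have hmembers : SatisfiesQBFMembers u ab ψ N :=
    ⟨.inl hN, iff_of_false (hNfalse u (.inr rfl)) (hNfalse ab (.inl hab))⟩
  obtain ⟨a, haN, haAb⟩ := hM.inter_nonempty ⟨ab, hM.1.2.mp hu, hab⟩ hmembers hNM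
  exact hNfalse a (.inl haAb) haN

theorem sat_qbfTheory_iff (hXY : Disjoint X Y) (hu : u ∉ X ∪ Y) (hab : ab ∈ Ab)
    (hAb : Disjoint (X ∪ Y ∪ {u}) Ab) (hψ : ψ.atoms ⊆ X ∪ Y) :
    NAT.sat Ab (qbfTheory Y u ab ψ) M ↔
      u ∉ M ∧ ψ.sat M ∨ u ∈ M ∧ ¬ ψ.SatisfiableGiven X Y M := by
  have hX : Disjoint X (Ab ∪ (Y ∪ {u})) := by grind
  have hY : Disjoint Y (Ab ∪ {u}) := by grind
  have hXAb : X ⊆ Abᶜ := by grind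
  have huAb : u ∉ Ab := Set.disjoint_left.mp hAb (.inr rfl)
  have hψAb : ψ.atoms ⊆ Abᶜ := by grind
  rw [sat_qbfTheory_iff_exists_isMinimalModel]
  constructor
  · rintro ⟨Ms, hMs, hmin⟩
    have huMs : u ∈ Ms ↔ u ∈ M := by simpa [huAb] using Set.ext_iff.mp hMs u
    have hψMs : ψ.sat Ms ↔ ψ.sat M := by
      rw [← PForm.sat_inter_iff hψAb, hMs, PForm.sat_inter_iff hψAb]
    have hMsX : Ms ∩ X = M ∩ X := inter_eq_inter_of_subset hXAb hMs
    by_cases huM : u ∈ M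
    · rw [← PForm.satisfiableGiven_congr hMsX]
      exact .inr ⟨huM,
        not_satisfiableGiven_of_isMinimalModel_qbf hab hψ hX hY hmin (huMs.mpr huM)⟩
    · exact .inl ⟨huM, hψMs.mp (hmin.1.1.resolve_right (huMs.not.mpr huM))⟩
  · rintro (⟨huM, hM⟩ | ⟨huM, hM⟩)
    · refine ⟨M ∩ Abᶜ, by grind, isMinimalModel_qbf_of_sat hab (by grind) (by grind) ?_⟩
      rwa [PForm.sat_inter_iff hψAb]
    · refine ⟨insert ab (M ∩ Abᶜ), by grind,
        isMinimalModel_qbf_of_not_satisfiableGiven hab hψ hX (by grind) (by grind) ?_⟩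
      have hMX : insert ab (M ∩ Abᶜ) ∩ X = M ∩ X := by grind
      rwa [PForm.satisfiableGiven_congr hMX]

theorem nat_T1_expresses_qbf_general (hXY : Disjoint X Y) (hu : u ∉ X ∪ Y) (hab : ab ∈ Ab)
    (hAb : Disjoint (X ∪ Y ∪ {u}) Ab) (hψ : ψ.atoms ⊆ X ∪ Y) :
    ((∀ M, NAT.sat Ab (qbfTheory Y u ab ψ) M → u ∉ M) ↔
      ∀ IX, ψ.SatisfiableGiven X Y IX) ∧
    ∀ M, NAT.sat Ab (qbfTheory Y u ab ψ) M → (u ∈ M ↔ ¬ ψ.SatisfiableGiven X Y M) := by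
  simp only [sat_qbfTheory_iff hXY hu hab hAb hψ]
  refine ⟨⟨fun h IX => ?_, fun hΦ M hM huM => ?_⟩, fun M hM => ?_⟩
  · by_contra hIX
    have hIXu : insert u IX ∩ X = IX ∩ X := Set.insert_inter_of_notMem fun h => hu (.inl h)
    refine h (insert u IX) (.inr ⟨Set.mem_insert u IX, ?_⟩) (Set.mem_insert u IX)
    rwa [PForm.satisfiableGiven_congr hIXu]
  · exact hM.elim (fun h => h.1 huM) fun h => h.2 (hΦ M)
  · obtain ⟨huM, hM⟩ | ⟨huM, hM⟩ := hM
    · exact iff_of_false huM (not_not_intro (hM.satisfiableGiven hψ))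
    · exact iff_of_true huM hM

end QBF

/-- Let `Φ = ∀X ∃Y ψ` with `ψ` propositional over the disjoint atom
sets `X` and `Y`, let `u` be a fresh atom, `ab ∈ Ab` an abnormality atom, `φ = ψ ∨ u`,
and let `T₁` be the NAT consisting of the single block `{Y, u : φ, u ↔ ab}`.  Then:
(a) `T₁ ⊨ ¬u` iff `Φ` is true; and
(b) every model `M` of `T₁` satisfies: `u ∈ M` iff `ψ[M[X]]` is unsatisfiable, i.e.,
no truth assignment to `Y` makes `ψ` true when `X` is fixed to its values in `M`. -/
theorem nat_T1_expresses_qbf (Ab X Y : Set α) (u ab : α) (ψ : PForm α)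
    (hXY : Disjoint X Y) (hu : u ∉ X ∪ Y) (hab : ab ∈ Ab)
    (hAb : Disjoint (X ∪ Y ∪ {u}) Ab) (hAt : X ∪ Y ∪ {u} ∪ Ab = Set.univ)
    (hatoms : ψ.atoms ⊆ X ∪ Y) :
    ((∀ M : Set α,
        NAT.sat Ab [Block.mk (Y ∪ {u})
          [ψ.disj (.atom u), PForm.iffF (.atom u) (.atom ab)] []] M → u ∉ M) ↔
      (∀ IX : Set α, ∃ IY : Set α, ψ.sat ((IX ∩ X) ∪ (IY ∩ Y)))) ∧
    (∀ M : Set α,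
        NAT.sat Ab [Block.mk (Y ∪ {u})
          [ψ.disj (.atom u), PForm.iffF (.atom u) (.atom ab)] []] M →
        (u ∈ M ↔ ¬ ∃ IY : Set α, ψ.sat ((M ∩ X) ∪ (IY ∩ Y)))) := by
  exact nat_T1_expresses_qbf_general hXY hu hab hAb hatoms

end NestedCirc
end

section
/- Let φ be a propositional formula over At, let P and Z be disjoint sets of atoms, let Q = At∖(P∪Z) be the fixed letters, and let M be an interpretation. Define φ_{M,Q} = ⋀_{q∈Q∩M} q ∧ ⋀_{q∈Q∖M} ¬q. Then M is a model of CIRC(φ;P;Z) if and only if M is a model of CIRC(φ ∧ φ_{M,Q}; P; Z∪Q); in particular, if φ is Horn then so is φ ∧ φ_{M,Q}, so model checking for circumscription with fixed letters reduces to model checking for circumscription without fixed letters while preserving the Horn property. -/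
/-!
STATEMENT 11: model checking for circumscription with fixed letters reduces to model
checking for circumscription without fixed letters, preserving the Horn property.
-/

namespace NestedCirc

universe u
variable {α : Type u}

/-- `φ` is a clause: a disjunction of literals (with `fls` for the empty clause). -/
def PForm.IsClause : PForm α → Prop
  | .fls => True
  | .atom _ => True
  | .neg (.atom _) => True
  | .disj φ ψ => φ.IsClause ∧ ψ.IsClause
  | _ => False

/-- The number of positive literals of a clause. -/
def PForm.posCount : PForm α → ℕ
  | .atom _ => 1
  | .disj φ ψ => φ.posCount + ψ.posCount
  | _ => 0

/-- A Horn clause: a clause with at most one positive literal. -/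
def PForm.IsHornClause (φ : PForm α) : Prop := φ.IsClause ∧ φ.posCount ≤ 1

/-- A Horn CNF: a conjunction of Horn clauses. -/
def PForm.IsHornCNF : PForm α → Prop
  | .tru => True
  | .conj φ ψ => φ.IsHornCNF ∧ ψ.IsHornCNF
  | φ => φ.IsHornClause

variable [Fintype α]

/-- A list enumerating a set of atoms (the alphabet is finite). -/
noncomputable def listOf (S : Set α) : List α := (Set.toFinite S).toFinset.toList

/-- `φ_{M,Q} = ⋀_{q∈Q∩M} q ∧ ⋀_{q∈Q∖M} ¬q`, the conjunction of literals pinning the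
letters of `Q` to their values in `M`. -/
noncomputable def pin (M Q : Set α) : PForm α :=
  PForm.conj (PForm.conjList ((listOf (Q ∩ M)).map PForm.atom))
             (PForm.conjList ((listOf (Q \ M)).map fun q => PForm.neg (PForm.atom q)))

section

variable {β : Type*}

/-- `M` is a model of the circumscription `CIRC(φ;P;Z)`, i.e. a model of `φ` that is minimal
for `<_{P;Z}`; the fixed letters are those of `(P ∪ Z)ᶜ`. -/
def IsCircModel (φ : PForm β) (P Z M : Set β) : Prop :=
  φ.sat M ∧ ∀ N : Set β, φ.sat N → ¬ ltPZ P Z N M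

namespace PForm

theorem sat_conjList {l : List (PForm β)} {N : Set β} :
    (conjList l).sat N ↔ ∀ ψ ∈ l, ψ.sat N := by
  induction l with
  | nil => simp [conjList, sat]
  | cons ψ l ih =>
    rw [List.forall_mem_cons, ← ih]
    rfl

theorem isHornCNF_conjList {l : List (PForm β)} :
    (conjList l).IsHornCNF ↔ ∀ ψ ∈ l, ψ.IsHornCNF := by
  induction l with
  | nil => simp [conjList, IsHornCNF]
  | cons ψ l ih =>
    rw [List.forall_mem_cons, ← ih]
    rfl

theorem isHornCNF_atom (a : β) : (atom a).IsHornCNF :=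
  ⟨trivial, le_rfl⟩

theorem isHornCNF_neg_atom (a : β) : (neg (atom a)).IsHornCNF :=
  ⟨trivial, zero_le_one⟩

end PForm

variable {φ ψ : PForm β} {P Z Q M N : Set β}

theorem inter_eq_inter_iff_forall_mem :
    N ∩ Q = M ∩ Q ↔ ∀ q ∈ Q, q ∈ N ↔ q ∈ M := by
  simp only [Set.ext_iff, Set.mem_inter_iff, and_congr_left_iff]

theorem lePZ_iff_lePZ_union_and_inter_eq (hQ : Q ⊆ (P ∪ Z)ᶜ) :
    lePZ P Z N M ↔ lePZ P (Z ∪ Q) N M ∧ N ∩ Q = M ∩ Q := by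
  have fixed_eq : (P ∪ Z)ᶜ = (P ∪ (Z ∪ Q))ᶜ ∪ Q := by
    rw [← Set.union_assoc, Set.compl_union (P ∪ Z), ← Set.sdiff_eq,
      Set.sdiff_union_of_subset hQ]
  have agree_union (A B : Set β) :
      N ∩ (A ∪ B) = M ∩ (A ∪ B) ↔ N ∩ A = M ∩ A ∧ N ∩ B = M ∩ B := by
    simp only [inter_eq_inter_iff_forall_mem, Set.mem_union, or_imp, forall_and]
  rw [lePZ, lePZ, fixed_eq, agree_union, and_assoc]

theorem ltPZ_iff_ltPZ_union_and_inter_eq (hQ : Q ⊆ (P ∪ Z)ᶜ) :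
    ltPZ P Z N M ↔ ltPZ P (Z ∪ Q) N M ∧ N ∩ Q = M ∩ Q := by
  simp only [ltPZ, lePZ_iff_lePZ_union_and_inter_eq hQ, eq_comm (a := M ∩ Q)]
  tauto

theorem isCircModel_iff_isCircModel_conj_of_sat_iff (hQ : Q ⊆ (P ∪ Z)ᶜ)
    (hψ : ∀ N, ψ.sat N ↔ N ∩ Q = M ∩ Q) :
    IsCircModel φ P Z M ↔ IsCircModel (φ.conj ψ) P (Z ∪ Q) M := by
  simp only [IsCircModel, PForm.sat, hψ, ltPZ_iff_ltPZ_union_and_inter_eq hQ, and_true]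
  refine and_congr_right' (forall_congr' fun N => ?_)
  tauto

end

theorem mem_listOf {S : Set α} {a : α} : a ∈ listOf S ↔ a ∈ S := by
  simp [listOf]

theorem sat_pin {M Q N : Set α} : (pin M Q).sat N ↔ N ∩ Q = M ∩ Q := by
  have sat_literals : (pin M Q).sat N ↔ (∀ q ∈ Q ∩ M, q ∈ N) ∧ ∀ q ∈ Q \ M, q ∉ N := by
    simp only [pin, PForm.sat, PForm.sat_conjList, List.forall_mem_map, mem_listOf]
  rw [sat_literals, inter_eq_inter_iff_forall_mem]
  grind

theorem isHornCNF_pin (M Q : Set α) : (pin M Q).IsHornCNF := by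
  simp only [pin, PForm.IsHornCNF, PForm.isHornCNF_conjList, List.forall_mem_map]
  exact ⟨fun q _ => PForm.isHornCNF_atom q, fun q _ => PForm.isHornCNF_neg_atom q⟩

theorem circ_fixed_letters_model_checking_general (φ : PForm α) {P Z Q : Set α}
    (hQ : Q ⊆ (P ∪ Z)ᶜ) (M : Set α) :
    (IsCircModel φ P Z M ↔ IsCircModel (φ.conj (pin M Q)) P (Z ∪ Q) M) ∧
      (φ.IsHornCNF → (φ.conj (pin M Q)).IsHornCNF) :=
  ⟨isCircModel_iff_isCircModel_conj_of_sat_iff hQ fun _ => sat_pin,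
    fun hφ => ⟨hφ, isHornCNF_pin M Q⟩⟩

/-- Let `φ` be propositional, `P`, `Z` disjoint, `Q = At∖(P∪Z)` the
fixed letters, and `M` an interpretation.  Then `M ⊨ CIRC(φ;P;Z)` iff
`M ⊨ CIRC(φ ∧ φ_{M,Q}; P; Z∪Q)`; in particular, if `φ` is Horn then so is
`φ ∧ φ_{M,Q}`, so model checking for circumscription with fixed letters reduces to
model checking for circumscription without fixed letters, preserving the Horn
property. -/
theorem circ_fixed_letters_model_checking (φ : PForm α) (P Z : Set α)
    (hPZ : Disjoint P Z) (M : Set α) :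
    ((φ.sat M ∧ ∀ N : Set α, φ.sat N → ¬ ltPZ P Z N M) ↔
      ((φ.conj (pin M (P ∪ Z)ᶜ)).sat M ∧
        ∀ N : Set α, (φ.conj (pin M (P ∪ Z)ᶜ)).sat N → ¬ ltPZ P (Z ∪ (P ∪ Z)ᶜ) N M)) ∧
    (φ.IsHornCNF → (φ.conj (pin M (P ∪ Z)ᶜ)).IsHornCNF) := by
  exact circ_fixed_letters_model_checking_general φ subset_rfl M

end NestedCirc
end
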